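/- Let R be a commutative ring in which every odd integer is invertible, and let I be an ideal of R. Suppose γ₂ : I → I is a function satisfying γ₂(x+y) = γ₂(x) + x·y + γ₂(y) for all x, y ∈ I and γ₂(a·x) = a²·γ₂(x) for all a ∈ R, x ∈ I. Then there exists a divided power structure (γₙ)ₙ≥₀ on I whose second operation is the given γ₂. (In particular 2·γ₂(x) = x² follows automatically from the two identities.) -/

import Mathlib

/-- A divided power structure on an ideal `I` of a commutative ring `R`:
a family of functions `γₙ : I → R` (encoded as `dpow : ℕ → R → R`, constrained on `I`)
satisfying the five axioms of Berthelot–Ogus. -/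
structure DividedPowerStructure (R : Type*) [CommRing R] (I : Ideal R) where
  dpow : ℕ → R → R
  dpow_zero : ∀ x ∈ I, dpow 0 x = 1
  dpow_one : ∀ x ∈ I, dpow 1 x = x
  dpow_mem : ∀ n : ℕ, 0 < n → ∀ x ∈ I, dpow n x ∈ I
  dpow_add : ∀ (n : ℕ), ∀ x ∈ I, ∀ y ∈ I,
    dpow n (x + y) = ∑ i ∈ Finset.range (n + 1), dpow i x * dpow (n - i) y
  dpow_smul : ∀ (n : ℕ) (a : R), ∀ x ∈ I, dpow n (a * x) = a ^ n * dpow n x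
  dpow_mul : ∀ (m n : ℕ), ∀ x ∈ I,
    dpow m x * dpow n x = ((m + n).choose m : R) * dpow (m + n) x
  dpow_comp : ∀ (m n : ℕ), 0 < m → ∀ x ∈ I,
    dpow n (dpow m x) =
      (((m * n).factorial / (m.factorial ^ n * n.factorial) : ℕ) : R) * dpow (m * n) x

/-!
Any divided power structure satisfies `(2n - 1)!! · γ₂ₙ(x) = γₙ(γ₂(x))`, as `(2n - 1)!!` counts the
perfect matchings of `2n` points, and `(2n + 1) · γ₂ₙ₊₁(x) = x · γ₂ₙ(x)`. Both coefficients are odd,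
so these relations define all the `γₙ` from `γ₂` by recursion on the binary digits of `n`, and each
axiom is proved by the same recursion. The essential case is the even step for sums, where
`γ₂ₙ(x + y)` is expanded through `γₙ(γ₂(x) + x * y + γ₂(y))`: the resulting coefficients count the
perfect matchings of a set split into two parts according to the number of pairs joining the parts.
-/

open Finset
open scoped Nat PowerSeries

theorem binary_induction {P : ℕ → Prop} (zero : P 0) (two_mul : ∀ n, P n → P (2 * n))
    (two_mul_add_one : ∀ n, P n → P (2 * n) → P (2 * n + 1)) (n : ℕ) : P n := by
  induction n using Nat.evenOddRec with
  | h0 => exact zero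
  | h_even n ih => exact two_mul n ih
  | h_odd n ih => exact two_mul_add_one n ih (two_mul n ih)

theorem uniformBell_mul_uniformBell_mul (k n : ℕ) {m : ℕ} (hm : m ≠ 0) :
    k.uniformBell n * (k * n).uniformBell m = n.uniformBell m ^ k * k.uniformBell (n * m) := by
  rcases Nat.eq_zero_or_pos n with rfl | hn
  · simp [Nat.uniformBell_zero_left, Nat.uniformBell_zero_right]
  have hkn := k.uniformBell_mul_eq hn.ne'
  have hnm := n.uniformBell_mul_eq hm
  have hknm := (k * n).uniformBell_mul_eq hm
  have hk_nm := k.uniformBell_mul_eq (Nat.mul_ne_zero hn.ne' hm)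
  apply Nat.eq_of_mul_eq_mul_right (show 0 < m ! ^ (k * n) * n ! ^ k * (k !) by positivity)
  calc k.uniformBell n * (k * n).uniformBell m * (m ! ^ (k * n) * n ! ^ k * k !)
      = (k * n).uniformBell m * m ! ^ (k * n) * (k.uniformBell n * n ! ^ k * k !) := by ring
    _ = k.uniformBell (n * m) * (n * m)! ^ k * k ! := by rw [hkn, hknm, hk_nm, mul_assoc]
    _ = n.uniformBell m ^ k * k.uniformBell (n * m) * (m ! ^ (k * n) * n ! ^ k * k !) := by
      rw [← hnm]; ring

theorem choose_left_mul_factorial_mul_factorial (m n : ℕ) :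
    (m + n).choose m * m ! * n ! = (m + n)! := by
  rw [Nat.choose_symm_add, Nat.add_choose_mul_factorial_mul_factorial]

theorem uniformBell_mul_uniformBell_mul_choose (a b : ℕ) {m : ℕ} (hm : m ≠ 0) :
    a.uniformBell m * b.uniformBell m * (a * m + b * m).choose (a * m) =
      (a + b).choose a * (a + b).uniformBell m := by
  have hchoose := choose_left_mul_factorial_mul_factorial (a * m) (b * m)
  rw [← add_mul, ← Nat.uniformBell_mul_eq a hm, ← Nat.uniformBell_mul_eq b hm,
    ← Nat.uniformBell_mul_eq (a + b) hm, ← choose_left_mul_factorial_mul_factorial a b,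
    pow_add] at hchoose
  rw [← add_mul]
  apply Nat.eq_of_mul_eq_mul_right (show 0 < m ! ^ a * m ! ^ b * (a ! * b !) by positivity)
  linarith

theorem add_one_mul_uniformBell_add_one (k : ℕ) {m : ℕ} (hm : m ≠ 0) :
    (k + 1) * (k + 1).uniformBell m = k.uniformBell m * (m + k * m).choose m := by
  have h := uniformBell_mul_uniformBell_mul_choose 1 k hm
  rw [Nat.uniformBell_one_left, one_mul, one_mul, Nat.choose_one_right, add_comm 1 k] at h
  exact h.symm

theorem add_one_sq_mul_uniformBell_two (m : ℕ) :
    (m + 1) ^ 2 * Nat.uniformBell 2 (m + 1) =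
      (m + m).choose m * (2 + (m + m)).choose 2 := by
  have hbell : 2 * Nat.uniformBell 2 (m + 1) = (m + 1).centralBinom := by
    have h := add_one_mul_uniformBell_add_one 1 m.succ_ne_zero
    rwa [Nat.uniformBell_one_left, one_mul, one_mul, ← two_mul (m + 1),
      ← Nat.centralBinom_eq_two_mul_choose] at h
  have hchoose : 2 * (2 + (m + m)).choose 2 = 2 * ((m + 1) * (2 * m + 1)) := by
    have h := Nat.add_one_mul_choose_eq (2 * m + 1) 1
    rw [Nat.choose_one_right] at h
    rw [← two_mul, add_comm 2, mul_comm 2, ← h]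
    ring
  apply Nat.eq_of_mul_eq_mul_left two_pos
  calc 2 * ((m + 1) ^ 2 * Nat.uniformBell 2 (m + 1))
      = (m + 1) * ((m + 1) * (m + 1).centralBinom) := by rw [← hbell]; ring
    _ = m.centralBinom * (2 * ((m + 1) * (2 * m + 1))) := by
      rw [Nat.succ_mul_centralBinom_succ]; ring
    _ = 2 * ((m + m).choose m * (2 + (m + m)).choose 2) := by
      rw [← hchoose, Nat.centralBinom_eq_two_mul_choose, two_mul m]; ring

theorem uniformBell_add_one_two (n : ℕ) :
    (n + 1).uniformBell 2 = (2 * n + 1) * n.uniformBell 2 := by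
  simp [Nat.uniformBell_succ_left, mul_comm n 2]

theorem odd_uniformBell_two (n : ℕ) : Odd (n.uniformBell 2) := by
  induction n with
  | zero => rw [Nat.uniformBell_zero_left]; exact odd_one
  | succ n ih => rw [uniformBell_add_one_two]; exact (odd_two_mul_add_one n).mul ih

theorem two_mul_factorial_eq_uniformBell (n : ℕ) :
    (2 * n)! = n.uniformBell 2 * 2 ^ n * n ! := by
  rw [mul_comm, ← Nat.uniformBell_mul_eq n two_ne_zero, Nat.factorial_two]

/-- The number of perfect matchings of a disjoint union `A ⊔ B` consisting of `i` pairs inside `A`,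
`j` pairs joining `A` to `B`, and `k` pairs inside `B`, where `A` has `2 * i + j` points and `B` has
`j + 2 * k`. The formula chooses the points of `A` and of `B` matched across, then matches. -/
def splitMatchings (i j k : ℕ) : ℕ :=
  i.uniformBell 2 * k.uniformBell 2 * j ! * (2 * i + j).choose (2 * i) * (j + 2 * k).choose j

theorem splitMatchings_mul_choose (i j k : ℕ) :
    splitMatchings i j k * (2 * (i + (j + k))).choose (2 * i + j) =
      (i + (j + k)).uniformBell 2 * ((i + (j + k)).choose i * ((j + k).choose j * 2 ^ j)) := by
  have hsplit := choose_left_mul_factorial_mul_factorial (2 * i + j) (j + 2 * k)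
  rw [show 2 * i + j + (j + 2 * k) = 2 * (i + (j + k)) by ring,
    two_mul_factorial_eq_uniformBell (i + (j + k)),
    ← choose_left_mul_factorial_mul_factorial (2 * i) j,
    ← choose_left_mul_factorial_mul_factorial j (2 * k),
    ← choose_left_mul_factorial_mul_factorial i (j + k),
    ← choose_left_mul_factorial_mul_factorial j k,
    two_mul_factorial_eq_uniformBell i, two_mul_factorial_eq_uniformBell k,
    pow_add, pow_add] at hsplit
  apply Nat.eq_of_mul_eq_mul_right (show 0 < 2 ^ i * 2 ^ k * (i ! * j ! * k !) by positivity)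
  rw [splitMatchings]
  linarith

open Polynomial in
theorem sum_choose_mul_choose_mul_two_pow (n a : ℕ) :
    ∑ p ∈ antidiagonal n, ∑ q ∈ antidiagonal p.2,
      (if 2 * p.1 + q.1 = a then n.choose p.1 * (p.2.choose q.1 * 2 ^ q.1) else 0) =
      (2 * n).choose a := by
  have hexpand : (X + 1 : ℕ[X]) ^ (2 * n) =
      ∑ p ∈ antidiagonal n, ∑ q ∈ antidiagonal p.2,
        monomial (2 * p.1 + q.1) (n.choose p.1 * (p.2.choose q.1 * 2 ^ q.1)) := by
    rw [pow_mul, show (X + 1 : ℕ[X]) ^ 2 = X ^ 2 + (2 * X + 1) by ring, (Commute.all _ _).add_pow']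
    refine sum_congr rfl fun p _ ↦ ?_
    rw [(Commute.all _ _).add_pow', mul_sum, smul_sum]
    refine sum_congr rfl fun q _ ↦ ?_
    rw [← C_mul_X_pow_eq_monomial]
    simp only [nsmul_eq_mul, one_pow, eq_natCast]
    push_cast
    ring
  simpa only [coeff_X_add_one_pow, finsetSum_coeff, coeff_monomial, Nat.cast_id]
    using (congrArg (coeff · a) hexpand).symm

theorem sum_splitMatchings (n a : ℕ) (ha : a ≤ 2 * n) :
    ∑ p ∈ antidiagonal n, ∑ q ∈ antidiagonal p.2,
      (if 2 * p.1 + q.1 = a then splitMatchings p.1 q.1 q.2 else 0) = n.uniformBell 2 := by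
  -- Scaled by `(2 * n).choose a`, the identity compares the coefficients of `X ^ a` in
  -- `(X ^ 2 + (2 * X + 1)) ^ n` and `(X + 1) ^ (2 * n)`.
  apply Nat.eq_of_mul_eq_mul_right (Nat.choose_pos ha)
  conv_rhs => rw [← sum_choose_mul_choose_mul_two_pow n a]
  simp only [sum_mul, mul_sum, ite_mul, mul_ite, zero_mul, mul_zero]
  refine sum_congr rfl fun p hp ↦ sum_congr rfl fun q hq ↦ ?_
  rw [HasAntidiagonal.mem_antidiagonal] at hp hq
  split_ifs with h
  · rw [← h, ← hp, ← hq, splitMatchings_mul_choose]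
  · rfl

theorem sum_splitMatchings_mul {R : Type*} [CommSemiring R] (n : ℕ) (f : ℕ × ℕ → R) :
    ∑ p ∈ antidiagonal n, ∑ q ∈ antidiagonal p.2,
      (splitMatchings p.1 q.1 q.2 : R) * f (2 * p.1 + q.1, q.1 + 2 * q.2) =
      (n.uniformBell 2 : R) * ∑ r ∈ antidiagonal (2 * n), f r := by
  let sizes (t : (_ : ℕ × ℕ) × ℕ × ℕ) : ℕ × ℕ := (2 * t.1.1 + t.2.1, t.2.1 + 2 * t.2.2)
  have hsizes : ∀ t ∈ (antidiagonal n).sigma fun p ↦ antidiagonal p.2,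
      sizes t ∈ antidiagonal (2 * n) := by
    simp only [mem_sigma, HasAntidiagonal.mem_antidiagonal, sizes]
    omega
  rw [sum_sigma', ← sum_fiberwise_of_maps_to hsizes, mul_sum]
  refine sum_congr rfl fun r hr ↦ ?_
  rw [HasAntidiagonal.mem_antidiagonal] at hr
  rw [← sum_splitMatchings n r.1 (by omega), sum_sigma', Nat.cast_sum, sum_mul, sum_filter]
  refine sum_congr rfl fun t ht ↦ ?_
  have hfst : sizes t = r ↔ 2 * t.1.1 + t.2.1 = r.1 := by
    have := hsizes t ht
    rw [HasAntidiagonal.mem_antidiagonal] at this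
    rw [Prod.ext_iff]
    simp only [sizes] at *
    omega
  by_cases h : sizes t = r
  · rw [if_pos h, if_pos (hfst.1 h), ← h]
  · rw [if_neg h, if_neg (mt hfst.2 h), Nat.cast_zero, zero_mul]

/-- The hypotheses on `γ₂` that the second operation of a divided power structure on `I` satisfies.
As in `DividedPowerStructure`, the operation is a function on `R` constrained on `I` only. -/
structure IsDividedSquare {R : Type*} [CommRing R] (I : Ideal R) (γ₂ : R → R) : Prop where
  mem : ∀ x ∈ I, γ₂ x ∈ I
  add : ∀ x ∈ I, ∀ y ∈ I, γ₂ (x + y) = γ₂ x + x * y + γ₂ y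
  smul : ∀ (a : R), ∀ x ∈ I, γ₂ (a * x) = a ^ 2 * γ₂ x

namespace IsDividedSquare

variable {R : Type*} [CommRing R] {I : Ideal R} {γ₂ : R → R}

theorem sq_eq_two_mul (h : IsDividedSquare I γ₂) {x : R} (hx : x ∈ I) : x ^ 2 = 2 * γ₂ x := by
  have hzero : γ₂ 0 = 0 := by simpa using h.smul 0 0 I.zero_mem
  have hneg : γ₂ (-x) = γ₂ x := by simpa using h.smul (-1) x hx
  have hadd := h.add x hx (-x) (I.neg_mem hx)
  rw [add_neg_cancel, hzero, hneg] at hadd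
  linear_combination hadd

/-- The divided powers generated by `γ₂`, by recursion on the binary digits of the exponent.
`Ring.inverse` is `0` on nonunits, so the value is meaningful only if odd integers are units. -/
noncomputable def dpow (γ₂ : R → R) : ℕ → R → R
  | 0, _ => 1
  | n + 1, x =>
    if Even n then Ring.inverse ((n + 1 : ℕ) : R) * (x * dpow γ₂ n x)
    else Ring.inverse ((((n + 1) / 2).uniformBell 2 : ℕ) : R) * dpow γ₂ ((n + 1) / 2) (γ₂ x)
  termination_by n => n

theorem dpow_zero (γ₂ : R → R) (x : R) : dpow γ₂ 0 x = 1 := by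
  rw [dpow]

section Recursion

variable (hodd : ∀ n : ℕ, Odd n → IsUnit (n : R))
include hodd

theorem uniformBell_mul_dpow_two_mul (n : ℕ) (x : R) :
    (n.uniformBell 2 : R) * dpow γ₂ (2 * n) x = dpow γ₂ n (γ₂ x) := by
  cases n with
  | zero => simp only [Nat.uniformBell_zero_left, Nat.cast_one, mul_zero, dpow_zero, mul_one]
  | succ n =>
    rw [show 2 * (n + 1) = 2 * n + 1 + 1 by ring, dpow,
      if_neg (Nat.not_even_iff_odd.2 (odd_two_mul_add_one n)),
      show (2 * n + 1 + 1) / 2 = n + 1 by omega,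
      Ring.mul_inverse_cancel_left _ _ (hodd _ (odd_uniformBell_two _))]

theorem two_mul_add_one_mul_dpow (n : ℕ) (x : R) :
    ((2 * n + 1 : ℕ) : R) * dpow γ₂ (2 * n + 1) x = x * dpow γ₂ (2 * n) x := by
  rw [dpow, if_pos (even_two_mul n),
    Ring.mul_inverse_cancel_left _ _ (hodd _ (odd_two_mul_add_one n))]

theorem isUnit_uniformBell_two (n : ℕ) : IsUnit (n.uniformBell 2 : R) :=
  hodd _ (odd_uniformBell_two n)

theorem isUnit_two_mul_add_one (n : ℕ) : IsUnit ((2 * n + 1 : ℕ) : R) :=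
  hodd _ (odd_two_mul_add_one n)

theorem dpow_one (x : R) : dpow γ₂ 1 x = x := by
  simpa [dpow_zero] using two_mul_add_one_mul_dpow (γ₂ := γ₂) hodd 0 x

theorem dpow_two (x : R) : dpow γ₂ 2 x = γ₂ x := by
  simpa [dpow_one hodd, Nat.uniformBell_one_left] using
    uniformBell_mul_dpow_two_mul (γ₂ := γ₂) hodd 1 x

end Recursion

variable (h : IsDividedSquare I γ₂) (hodd : ∀ n : ℕ, Odd n → IsUnit (n : R))
include h hodd

theorem dpow_mem {n : ℕ} (hn : n ≠ 0) {x : R} (hx : x ∈ I) : dpow γ₂ n x ∈ I := by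
  induction n using binary_induction generalizing x with
  | zero => exact absurd rfl hn
  | two_mul n ih =>
    rw [← Ideal.unit_mul_mem_iff_mem I (isUnit_uniformBell_two hodd n),
      uniformBell_mul_dpow_two_mul hodd]
    exact ih (right_ne_zero_of_mul hn) (h.mem x hx)
  | two_mul_add_one n =>
    rw [← Ideal.unit_mul_mem_iff_mem I (isUnit_two_mul_add_one hodd n),
      two_mul_add_one_mul_dpow hodd]
    exact I.mul_mem_right _ hx

theorem dpow_smul (n : ℕ) (a : R) {x : R} (hx : x ∈ I) :
    dpow γ₂ n (a * x) = a ^ n * dpow γ₂ n x := by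
  induction n using binary_induction generalizing a x with
  | zero => simp only [dpow_zero, pow_zero, mul_one]
  | two_mul n ih =>
    apply (isUnit_uniformBell_two hodd n).mul_left_cancel
    rw [uniformBell_mul_dpow_two_mul hodd, h.smul a x hx, ih _ (h.mem x hx),
      ← uniformBell_mul_dpow_two_mul hodd]
    ring
  | two_mul_add_one n _ ih =>
    apply (isUnit_two_mul_add_one hodd n).mul_left_cancel
    rw [two_mul_add_one_mul_dpow hodd, ih a hx]
    linear_combination (-a ^ (2 * n + 1)) * two_mul_add_one_mul_dpow (γ₂ := γ₂) hodd n x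

theorem mul_dpow (n : ℕ) {x : R} (hx : x ∈ I) :
    x * dpow γ₂ n x = ((n + 1 : ℕ) : R) * dpow γ₂ (n + 1) x := by
  induction n using binary_induction generalizing x with
  | zero => simp [dpow_zero, dpow_one hodd]
  | two_mul n => exact (two_mul_add_one_mul_dpow hodd n x).symm
  | two_mul_add_one n ih =>
    apply ((isUnit_uniformBell_two hodd n).mul (isUnit_two_mul_add_one hodd n)).mul_left_cancel
    have hhalf := ih (h.mem x hx)
    rw [← uniformBell_mul_dpow_two_mul hodd, ← uniformBell_mul_dpow_two_mul hodd,
      uniformBell_add_one_two] at hhalf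
    have hrec := two_mul_add_one_mul_dpow (γ₂ := γ₂) hodd n x
    have hsq := h.sq_eq_two_mul hx
    rw [show 2 * n + 1 + 1 = 2 * (n + 1) by ring]
    push_cast at *
    linear_combination 2 * hhalf + n.uniformBell 2 * x * hrec
      + n.uniformBell 2 * dpow γ₂ (2 * n) x * hsq

theorem pow_eq_factorial_mul_dpow (n : ℕ) {x : R} (hx : x ∈ I) :
    x ^ n = (n ! : R) * dpow γ₂ n x := by
  induction n with
  | zero => simp [dpow_zero]
  | succ n ih =>
    rw [pow_succ', ih, Nat.factorial_succ, Nat.cast_mul, mul_left_comm, h.mul_dpow hodd n hx]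
    ring

theorem dpow_add_one_mul_dpow_of_even {m n : ℕ} (hm : Even m) {x : R} (hx : x ∈ I)
    (hmn : dpow γ₂ m x * dpow γ₂ n x = ((m + n).choose m : R) * dpow γ₂ (m + n) x) :
    dpow γ₂ (m + 1) x * dpow γ₂ n x =
      ((m + 1 + n).choose (m + 1) : R) * dpow γ₂ (m + 1 + n) x := by
  apply (hodd (m + 1) hm.add_one).mul_left_cancel
  have hchoose : ((m + n + 1 : ℕ) : R) * ((m + n).choose m : R) =
      ((m + n + 1).choose (m + 1) : R) * ((m + 1 : ℕ) : R) := by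
    rw [← Nat.cast_mul, ← Nat.cast_mul, Nat.add_one_mul_choose_eq]
  rw [add_right_comm m 1 n]
  calc ((m + 1 : ℕ) : R) * (dpow γ₂ (m + 1) x * dpow γ₂ n x)
      = x * (dpow γ₂ m x * dpow γ₂ n x) := by
        rw [← mul_assoc, ← h.mul_dpow hodd m hx, mul_assoc]
    _ = ((m + n).choose m : R) * (((m + n + 1 : ℕ) : R) * dpow γ₂ (m + n + 1) x) := by
        rw [hmn, mul_left_comm, h.mul_dpow hodd _ hx]
    _ = _ := by linear_combination dpow γ₂ (m + n + 1) x * hchoose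

theorem dpow_mul_dpow (m n : ℕ) {x : R} (hx : x ∈ I) :
    dpow γ₂ m x * dpow γ₂ n x = ((m + n).choose m : R) * dpow γ₂ (m + n) x := by
  induction m using binary_induction generalizing n x with
  | zero => simp [dpow_zero]
  | two_mul a ih =>
    have heven (b : ℕ) : dpow γ₂ (2 * a) x * dpow γ₂ (2 * b) x =
        ((2 * a + 2 * b).choose (2 * a) : R) * dpow γ₂ (2 * a + 2 * b) x := by
      apply ((isUnit_uniformBell_two hodd a).mul (isUnit_uniformBell_two hodd b)).mul_left_cancel
      have hhalf := ih b (h.mem x hx)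
      simp only [← uniformBell_mul_dpow_two_mul hodd, mul_add] at hhalf
      have hchoose := congrArg (Nat.cast (R := R))
        (uniformBell_mul_uniformBell_mul_choose a b two_ne_zero)
      rw [mul_comm a, mul_comm b] at hchoose
      push_cast at hchoose
      linear_combination hhalf - dpow γ₂ (2 * a + 2 * b) x * hchoose
    obtain ⟨b, rfl | rfl⟩ := n.even_or_odd'
    · exact heven b
    · have hswap := heven b
      rw [mul_comm, Nat.choose_symm_add, add_comm (2 * a)] at hswap
      have hsucc := h.dpow_add_one_mul_dpow_of_even hodd (even_two_mul b) hx hswap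
      rwa [mul_comm, Nat.choose_symm_add, add_comm _ (2 * a)] at hsucc
  | two_mul_add_one a _ ih =>
    exact h.dpow_add_one_mul_dpow_of_even hodd (even_two_mul a) hx (ih n hx)

theorem dpow_mul_dpow_mul_dpow_eq_splitMatchings (i j k : ℕ) {x y : R} (hx : x ∈ I) (hy : y ∈ I) :
    dpow γ₂ i (γ₂ x) * (dpow γ₂ j (x * y) * dpow γ₂ k (γ₂ y)) =
      (splitMatchings i j k : R) * (dpow γ₂ (2 * i + j) x * dpow γ₂ (j + 2 * k) y) := by
  have hx_mul := h.dpow_mul_dpow hodd (2 * i) j hx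
  have hy_mul := h.dpow_mul_dpow hodd j (2 * k) hy
  rw [h.dpow_smul hodd j x hy, h.pow_eq_factorial_mul_dpow hodd j hx,
    ← uniformBell_mul_dpow_two_mul hodd, ← uniformBell_mul_dpow_two_mul hodd]
  simp only [splitMatchings, Nat.cast_mul]
  linear_combination
    (i.uniformBell 2 * k.uniformBell 2 * j !) * (dpow γ₂ j y * dpow γ₂ (2 * k) y) * hx_mul +
      (i.uniformBell 2 * k.uniformBell 2 * j !) *
        ((2 * i + j).choose (2 * i) * dpow γ₂ (2 * i + j) x) * hy_mul

theorem add_mul_sum_dpow_mul_dpow (n : ℕ) {x y : R} (hx : x ∈ I) (hy : y ∈ I) :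
    (x + y) * ∑ p ∈ antidiagonal n, dpow γ₂ p.1 x * dpow γ₂ p.2 y =
      ((n + 1 : ℕ) : R) * ∑ p ∈ antidiagonal (n + 1), dpow γ₂ p.1 x * dpow γ₂ p.2 y := by
  let expSeries (z : R) : R⟦X⟧ := PowerSeries.mk (dpow γ₂ · z)
  have hderiv {z : R} (hz : z ∈ I) :
      PowerSeries.derivative R (expSeries z) = PowerSeries.C z * expSeries z := by
    ext m
    rw [PowerSeries.coeff_derivative, PowerSeries.coeff_C_mul, PowerSeries.coeff_mk,
      PowerSeries.coeff_mk, h.mul_dpow hodd m hz]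
    push_cast
    ring
  have hleibniz : PowerSeries.derivative R (expSeries x * expSeries y) =
      PowerSeries.C (x + y) * (expSeries x * expSeries y) := by
    rw [Derivation.leibniz, hderiv hx, hderiv hy, map_add, smul_eq_mul, smul_eq_mul]
    ring
  have hcoeff := congrArg (PowerSeries.coeff n) hleibniz
  rw [PowerSeries.coeff_derivative, PowerSeries.coeff_C_mul] at hcoeff
  simp only [PowerSeries.coeff_mul, expSeries, PowerSeries.coeff_mk] at hcoeff
  rw [← hcoeff]
  push_cast
  ring

theorem dpow_add (n : ℕ) {x y : R} (hx : x ∈ I) (hy : y ∈ I) :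
    dpow γ₂ n (x + y) = ∑ p ∈ antidiagonal n, dpow γ₂ p.1 x * dpow γ₂ p.2 y := by
  induction n using Nat.strong_induction_on generalizing x y with
  | _ n ih =>
  obtain ⟨k, rfl | rfl⟩ := n.even_or_odd'
  · rcases Nat.eq_zero_or_pos k with rfl | hk
    · simp [dpow_zero]
    have hxy : x * y ∈ I := I.mul_mem_left _ hy
    apply (isUnit_uniformBell_two hodd k).mul_left_cancel
    rw [uniformBell_mul_dpow_two_mul hodd, h.add x hx y hy, add_assoc,
      ih k (by omega) (h.mem x hx) (I.add_mem hxy (h.mem y hy)),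
      ← sum_splitMatchings_mul k fun p ↦ dpow γ₂ p.1 x * dpow γ₂ p.2 y]
    refine sum_congr rfl fun p hp ↦ ?_
    have hp_lt : p.2 < 2 * k := by
      have := HasAntidiagonal.mem_antidiagonal.1 hp
      omega
    rw [ih p.2 hp_lt hxy (h.mem y hy), mul_sum]
    exact sum_congr rfl fun q _ ↦
      h.dpow_mul_dpow_mul_dpow_eq_splitMatchings hodd p.1 q.1 q.2 hx hy
  · apply (isUnit_two_mul_add_one hodd k).mul_left_cancel
    rw [two_mul_add_one_mul_dpow hodd, ih (2 * k) (by omega) hx hy,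
      h.add_mul_sum_dpow_mul_dpow hodd (2 * k) hx hy]

theorem gamma_two_dpow {m : ℕ} (hm : m ≠ 0) {x : R} (hx : x ∈ I) :
    γ₂ (dpow γ₂ m x) = (Nat.uniformBell 2 m : R) * dpow γ₂ (2 * m) x := by
  induction m using binary_induction generalizing x with
  | zero => exact absurd rfl hm
  | two_mul a ih =>
    have hhalf := ih (right_ne_zero_of_mul hm) (h.mem x hx)
    rw [← uniformBell_mul_dpow_two_mul hodd, ← uniformBell_mul_dpow_two_mul hodd,
      h.smul _ _ (h.dpow_mem hodd hm hx)] at hhalf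
    have hbell := congrArg (Nat.cast (R := R)) (uniformBell_mul_uniformBell_mul 2 a two_ne_zero)
    rw [mul_comm a] at hbell
    push_cast at hbell
    apply ((isUnit_uniformBell_two hodd a).pow 2).mul_left_cancel
    linear_combination hhalf + dpow γ₂ (2 * (2 * a)) x * hbell
  | two_mul_add_one a =>
    apply ((isUnit_two_mul_add_one hodd a).pow 2).mul_left_cancel
    have hbell := congrArg (Nat.cast (R := R)) (add_one_sq_mul_uniformBell_two (2 * a))
    push_cast at hbell
    calc ((2 * a + 1 : ℕ) : R) ^ 2 * γ₂ (dpow γ₂ (2 * a + 1) x)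
        = γ₂ (dpow γ₂ (2 * a) x * x) := by
          rw [← h.smul _ _ (h.dpow_mem hodd hm hx), two_mul_add_one_mul_dpow hodd, mul_comm x]
      _ = dpow γ₂ 2 x * (dpow γ₂ (2 * a) x * dpow γ₂ (2 * a) x) := by
          rw [h.smul _ x hx, dpow_two hodd]
          ring
      _ = ((2 * a + 2 * a).choose (2 * a) : R) * ((2 + (2 * a + 2 * a)).choose 2 : R) *
            dpow γ₂ (2 * (2 * a + 1)) x := by
          rw [h.dpow_mul_dpow hodd _ _ hx, mul_left_comm, h.dpow_mul_dpow hodd _ _ hx,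
            show 2 + (2 * a + 2 * a) = 2 * (2 * a + 1) by ring, mul_assoc]
      _ = _ := by
          push_cast
          linear_combination -dpow γ₂ (2 * (2 * a + 1)) x * hbell

theorem dpow_dpow (n : ℕ) {m : ℕ} (hm : m ≠ 0) {x : R} (hx : x ∈ I) :
    dpow γ₂ n (dpow γ₂ m x) = (n.uniformBell m : R) * dpow γ₂ (n * m) x := by
  induction n using binary_induction generalizing m x with
  | zero => simp [dpow_zero, Nat.uniformBell_zero_left]
  | two_mul k ih =>
    apply (isUnit_uniformBell_two hodd k).mul_left_cancel
    have hbell := congrArg (Nat.cast (R := R)) (uniformBell_mul_uniformBell_mul k 2 hm)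
    rw [uniformBell_mul_dpow_two_mul hodd, h.gamma_two_dpow hodd hm hx,
      h.dpow_smul hodd _ _ (h.dpow_mem hodd (by omega) hx), ih (by omega) hx,
      ← mul_assoc k 2 m, mul_comm k 2]
    rw [mul_comm k 2] at hbell
    push_cast at hbell
    linear_combination -dpow γ₂ (2 * k * m) x * hbell
  | two_mul_add_one k _ ih =>
    apply (isUnit_two_mul_add_one hodd k).mul_left_cancel
    have hbell := congrArg (Nat.cast (R := R)) (add_one_mul_uniformBell_add_one (2 * k) hm)
    have hmul := h.dpow_mul_dpow hodd m (2 * k * m) hx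
    rw [two_mul_add_one_mul_dpow hodd, ih hm hx, add_one_mul, add_comm (2 * k * m)]
    push_cast at *
    linear_combination ((2 * k).uniformBell m : R) * hmul - dpow γ₂ (m + 2 * k * m) x * hbell

end IsDividedSquare

/-- If every odd integer is invertible in `R` and `γ₂ : I → I` satisfies
`γ₂(x+y) = γ₂ x + x·y + γ₂ y` and `γ₂(a·x) = a² γ₂ x`, then there is a divided power
structure on `I` whose second operation is `γ₂`. -/
theorem exists_dividedPowerStructure_of_gamma_two
    (R : Type*) [CommRing R] (I : Ideal R)
    (hodd : ∀ n : ℤ, Odd n → IsUnit (n : R))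
    (γ₂ : R → R)
    (hmem : ∀ x ∈ I, γ₂ x ∈ I)
    (hadd : ∀ x ∈ I, ∀ y ∈ I, γ₂ (x + y) = γ₂ x + x * y + γ₂ y)
    (hsmul : ∀ (a : R), ∀ x ∈ I, γ₂ (a * x) = a ^ 2 * γ₂ x) :
    ∃ D : DividedPowerStructure R I, ∀ x ∈ I, D.dpow 2 x = γ₂ x := by
  have hodd_nat (n : ℕ) (hn : Odd n) : IsUnit (n : R) := by
    simpa using hodd n (by exact_mod_cast hn)
  have h : IsDividedSquare I γ₂ := ⟨hmem, hadd, hsmul⟩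
  refine ⟨{
    dpow := IsDividedSquare.dpow γ₂
    dpow_zero := fun x _ ↦ IsDividedSquare.dpow_zero γ₂ x
    dpow_one := fun x _ ↦ IsDividedSquare.dpow_one hodd_nat x
    dpow_mem := fun n hn x hx ↦ h.dpow_mem hodd_nat hn.ne' hx
    dpow_add := fun n x hx y hy ↦ ?_
    dpow_smul := fun n a x hx ↦ h.dpow_smul hodd_nat n a hx
    dpow_mul := fun m n x hx ↦ h.dpow_mul_dpow hodd_nat m n hx
    dpow_comp := fun m n hm x hx ↦ ?_ }, fun x _ ↦ IsDividedSquare.dpow_two hodd_nat x⟩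
  · rw [h.dpow_add hodd_nat n hx hy, Nat.sum_antidiagonal_eq_sum_range_succ_mk]
  · rw [mul_comm m n, ← Nat.uniformBell_eq_div n hm.ne', h.dpow_dpow hodd_nat n hm.ne' hx]
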